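/- For every T > 0 and K > 0 there exist constants ε > 0 and C > 0, depending only on T and K, with the following property: whenever f₁, a₁, a₂, a₃, h ∈ ℝ satisfy |f₁| ≤ K, |a₁| ≤ K, |h| ≤ K, a₃ ≤ ε, a₂ ≤ ε, and F(h) > 0 where F(y) = f₁ + a₁y + a₂y² + a₃y³, the backward ODE admits a continuous solution y : [0,T] → ℝ with y(t) = h + ∫_t^T F(y(s)) ds and h ≤ y(t) ≤ C for all t ∈ [0,T]. -/

import Mathlib

open MeasureTheory Set

/-!
Reversing time turns the backward equation into `u' = F u`, `u 0 = h`. Since `F h ≥ 0`, the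
constant `h` is a lower barrier. As long as `0 ≤ x ≤ C` and `a₂, a₃ ≤ ε = K / (C² + C³)`, the
nonlinear part of `F x` is at most `K`, so `F x ≤ K x + 2 K`; hence the solution of
`β' = K β + 2 K`, `β 0 = K`, is an upper barrier up to time `T` once `C` is chosen to be `β T`.
Truncating `F` at the two barriers makes it globally Lipschitz and bounded, and the solution of the
truncated equation never leaves the region where the truncation has no effect.
-/

open scoped NNReal

section BoundedField

variable {E : Type*} [NormedAddCommGroup E] [NormedSpace ℝ E] [CompleteSpace E]

theorem exists_hasDerivWithinAt_Icc_of_lipschitzWith_of_bounded {v : ℝ → E → E} {a b : ℝ}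
    {L M : ℝ≥0} (hab : a ≤ b) (hlip : ∀ t ∈ Icc a b, LipschitzWith L (v t))
    (hcont : ∀ x, ContinuousOn (v · x) (Icc a b)) (hbdd : ∀ t ∈ Icc a b, ∀ x, ‖v t x‖ ≤ M)
    (x₀ : E) :
    ∃ u : ℝ → E, u a = x₀ ∧ ∀ t ∈ Icc a b, HasDerivWithinAt u (v t (u t)) (Icc a b) t := by
  have hPL : IsPicardLindelof v (⟨a, left_mem_Icc.2 hab⟩ : Icc a b) x₀
      (M * (b - a).toNNReal) 0 M L :=
    { lipschitzOnWith := fun t ht => (hlip t ht).lipschitzOnWith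
      continuousOn := fun x _ => hcont x
      norm_le := fun t ht x _ => hbdd t ht x
      mul_max_le := by simp [hab] }
  exact hPL.exists_eq_forall_mem_Icc_hasDerivWithinAt₀

end BoundedField

section Comparison

variable {f f' g g' : ℝ → ℝ} {a b : ℝ}

theorem le_of_deriv_right_le_of_lt (hf : ContinuousOn f (Icc a b))
    (hf' : ∀ t ∈ Ico a b, HasDerivWithinAt f (f' t) (Ici t) t)
    (hg : ContinuousOn g (Icc a b)) (hg' : ∀ t ∈ Ico a b, HasDerivWithinAt g (g' t) (Ici t) t)
    (ha : f a ≤ g a) (hle : ∀ t ∈ Ico a b, g t < f t → f' t ≤ g' t) :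
    ∀ t ∈ Icc a b, f t ≤ g t := by
  have le_perturbed (δ : ℝ) (hδ : 0 < δ) : ∀ t ∈ Icc a b, f t ≤ g t + δ * (t - a + 1) := by
    refine image_le_of_deriv_right_lt_deriv_boundary' (B' := fun t => g' t + δ * 1) hf hf'
      (by linarith) (by fun_prop) (fun t ht => ?_) (fun t ht heq => ?_)
    · exact (hg' t ht).add ((((hasDerivWithinAt_id t _).sub_const a).add_const 1).const_mul δ)
    · have : 0 < δ * (t - a + 1) := mul_pos hδ (by linarith [ht.1])
      linarith [hle t ht (by linarith)]
  intro t ht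
  have hpos : 0 < t - a + 1 := by linarith [ht.1]
  refine le_of_forall_pos_le_add fun η hη => ?_
  simpa only [div_mul_cancel₀ η hpos.ne'] using le_perturbed (η / (t - a + 1)) (by positivity) t ht

end Comparison

/-- The field `F` truncated at the curves `α ≤ β`: at time `t` the argument `x` is first projected
to `[α t, β t]`. A field that is Lipschitz only between the curves becomes globally Lipschitz. -/
noncomputable def truncatedField (F : ℝ → ℝ → ℝ) (α β : ℝ → ℝ) (t x : ℝ) : ℝ :=
  F t (max (α t) (min (β t) x))

section Truncation

variable {F : ℝ → ℝ → ℝ} {α β : ℝ → ℝ} {a b t x : ℝ} {L : ℝ≥0}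

theorem max_min_mem_Icc {R : Type*} [LinearOrder R] {m M : R} (h : m ≤ M) (x : R) :
    max m (min M x) ∈ Icc m M :=
  ⟨le_max_left _ _, max_le h (min_le_left _ _)⟩

theorem truncatedField_of_mem (hx : x ∈ Icc (α t) (β t)) : truncatedField F α β t x = F t x := by
  rw [truncatedField, min_eq_right hx.2, max_eq_right hx.1]

theorem truncatedField_of_le (hx : x ≤ α t) : truncatedField F α β t x = F t (α t) := by
  rw [truncatedField, max_eq_left ((min_le_right _ _).trans hx)]

theorem truncatedField_of_ge (hαβ : α t ≤ β t) (hx : β t ≤ x) :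
    truncatedField F α β t x = F t (β t) := by
  rw [truncatedField, min_eq_left hx, max_eq_right hαβ]

theorem lipschitzWith_truncatedField (hαβ : α t ≤ β t)
    (hF : LipschitzOnWith L (F t) (Icc (α t) (β t))) :
    LipschitzWith L (truncatedField F α β t) := by
  have hproj : LipschitzWith 1 fun x => max (α t) (min (β t) x) :=
    (LipschitzWith.id.const_min _).const_max _
  have hcomp := hF.comp hproj.lipschitzOnWith fun x (_ : x ∈ univ) => max_min_mem_Icc hαβ x
  rwa [mul_one, lipschitzOnWith_univ] at hcomp

theorem continuousOn_truncatedField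
    (hF : ContinuousOn F.uncurry {p | p.1 ∈ Icc a b ∧ p.2 ∈ Icc (α p.1) (β p.1)})
    (hα : ContinuousOn α (Icc a b)) (hβ : ContinuousOn β (Icc a b))
    (hαβ : ∀ t ∈ Icc a b, α t ≤ β t) (x : ℝ) :
    ContinuousOn (truncatedField F α β · x) (Icc a b) :=
  hF.comp (continuousOn_id.prodMk (hα.sup (hβ.inf continuousOn_const)))
    fun t ht => ⟨ht, max_min_mem_Icc (hαβ t ht) x⟩

theorem exists_norm_truncatedField_le
    (hF : ContinuousOn F.uncurry {p | p.1 ∈ Icc a b ∧ p.2 ∈ Icc (α p.1) (β p.1)})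
    (hlip : ∀ t ∈ Icc a b, LipschitzOnWith L (F t) (Icc (α t) (β t)))
    (hα : ContinuousOn α (Icc a b)) (hβ : ContinuousOn β (Icc a b))
    (hαβ : ∀ t ∈ Icc a b, α t ≤ β t) :
    ∃ M : ℝ≥0, ∀ t ∈ Icc a b, ∀ x, ‖truncatedField F α β t x‖ ≤ M := by
  have hFα : ContinuousOn (fun t => F t (α t)) (Icc a b) :=
    hF.comp (continuousOn_id.prodMk hα) fun t ht => ⟨ht, left_mem_Icc.2 (hαβ t ht)⟩
  obtain ⟨M, hM⟩ := isCompact_Icc.exists_bound_of_continuousOn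
    (hFα.norm.add ((hβ.sub hα).const_mul (L : ℝ)))
  refine ⟨M.toNNReal, fun t ht x => ?_⟩
  obtain ⟨hlow, hupp⟩ := max_min_mem_Icc (hαβ t ht) x
  set z := max (α t) (min (β t) x)
  calc ‖F t z‖ ≤ ‖F t (α t)‖ + ‖F t z - F t (α t)‖ := norm_le_norm_add_norm_sub' _ _
    _ ≤ ‖F t (α t)‖ + L * ‖z - α t‖ := by
      gcongr
      exact (hlip t ht).norm_sub_le ⟨hlow, hupp⟩ (left_mem_Icc.2 (hαβ t ht))
    _ ≤ ‖F t (α t)‖ + L * (β t - α t) := by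
      gcongr
      rw [Real.norm_of_nonneg (sub_nonneg.2 hlow)]
      gcongr
    _ ≤ M := (Real.le_norm_self _).trans (hM t ht)
    _ ≤ M.toNNReal := Real.le_coe_toNNReal M

end Truncation

section Barriers

variable {F : ℝ → ℝ → ℝ} {α α' β β' : ℝ → ℝ} {a b x₀ : ℝ} {L : ℝ≥0}

theorem exists_hasDerivWithinAt_mem_Icc_of_barriers (hab : a ≤ b)
    (hF : ContinuousOn F.uncurry {p | p.1 ∈ Icc a b ∧ p.2 ∈ Icc (α p.1) (β p.1)})
    (hlip : ∀ t ∈ Icc a b, LipschitzOnWith L (F t) (Icc (α t) (β t)))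
    (hα : ContinuousOn α (Icc a b)) (hα' : ∀ t ∈ Ico a b, HasDerivWithinAt α (α' t) (Ici t) t)
    (hαF : ∀ t ∈ Ico a b, α' t ≤ F t (α t))
    (hβ : ContinuousOn β (Icc a b)) (hβ' : ∀ t ∈ Ico a b, HasDerivWithinAt β (β' t) (Ici t) t)
    (hFβ : ∀ t ∈ Ico a b, F t (β t) ≤ β' t)
    (hαβ : ∀ t ∈ Icc a b, α t ≤ β t) (hx₀ : x₀ ∈ Icc (α a) (β a)) :
    ∃ u : ℝ → ℝ, u a = x₀ ∧ ∀ t ∈ Icc a b,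
      HasDerivWithinAt u (F t (u t)) (Icc a b) t ∧ u t ∈ Icc (α t) (β t) := by
  obtain ⟨M, hM⟩ := exists_norm_truncatedField_le hF hlip hα hβ hαβ
  obtain ⟨u, rfl, hu⟩ := exists_hasDerivWithinAt_Icc_of_lipschitzWith_of_bounded hab
    (fun t ht => lipschitzWith_truncatedField (hαβ t ht) (hlip t ht))
    (continuousOn_truncatedField hF hα hβ hαβ) hM x₀
  have hu_cont : ContinuousOn u (Icc a b) := fun t ht => (hu t ht).continuousWithinAt
  have hu_right : ∀ t ∈ Ico a b,
      HasDerivWithinAt u (truncatedField F α β t (u t)) (Ici t) t := fun t ht =>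
    (hu t (Ico_subset_Icc_self ht)).mono_of_mem_nhdsWithin (Icc_mem_nhdsGE_of_mem ht)
  have hαu : ∀ t ∈ Icc a b, α t ≤ u t :=
    le_of_deriv_right_le_of_lt hα hα' hu_cont hu_right hx₀.1 fun t ht hlt =>
      (hαF t ht).trans_eq (truncatedField_of_le hlt.le).symm
  have huβ : ∀ t ∈ Icc a b, u t ≤ β t :=
    le_of_deriv_right_le_of_lt hu_cont hu_right hβ hβ' hx₀.2 fun t ht hlt =>
      (truncatedField_of_ge (hαβ t (Ico_subset_Icc_self ht)) hlt.le).trans_le (hFβ t ht)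
  refine ⟨u, rfl, fun t ht => ?_⟩
  have hmem : u t ∈ Icc (α t) (β t) := ⟨hαu t ht, huβ t ht⟩
  exact ⟨truncatedField_of_mem (F := F) hmem ▸ hu t ht, hmem⟩

end Barriers

/-- `y` is a solution on `[0, T]` of the backward ODE with generator `F` and terminal value `h`,
in integral form. -/
def IsBackwardSolution {E : Type*} [NormedAddCommGroup E] [NormedSpace ℝ E]
    (F : ℝ → E → E) (h : E) (T : ℝ) (y : ℝ → E) : Prop :=
  ContinuousOn y (Icc 0 T) ∧ ∀ t ∈ Icc 0 T, y t = h + ∫ s in t..T, F s (y s)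

theorem isBackwardSolution_comp_sub_left {E : Type*} [NormedAddCommGroup E] [NormedSpace ℝ E]
    [CompleteSpace E] {F : ℝ → E → E} {T : ℝ} {u : ℝ → E}
    (hu : ∀ t ∈ Icc 0 T, HasDerivWithinAt u (F (T - t) (u t)) (Icc 0 T) t)
    (hFu : ContinuousOn (fun t => F (T - t) (u t)) (Icc 0 T)) :
    IsBackwardSolution F (u 0) T fun t => u (T - t) := by
  have hu_cont : ContinuousOn u (Icc 0 T) := fun t ht => (hu t ht).continuousWithinAt
  have hreflect : MapsTo (T - ·) (Icc 0 T) (Icc 0 T) := fun _ =>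
    sub_mem_Icc_zero_iff_right.2
  refine ⟨hu_cont.comp (by fun_prop) hreflect, fun t ht => ?_⟩
  have hsub : Icc 0 (T - t) ⊆ Icc 0 T := Icc_subset_Icc_right (hreflect ht).2
  have hFTC : ∫ s in 0..(T - t), F (T - s) (u s) = u (T - t) - u 0 := by
    refine intervalIntegral.integral_eq_sub_of_hasDerivAt_of_le (hreflect ht).1
      (hu_cont.mono hsub) (fun s hs => ?_) ?_
    · exact (hu s (hsub (Ioo_subset_Icc_self hs))).hasDerivAt
        (Icc_mem_nhds hs.1 (hs.2.trans_le (hreflect ht).2))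
    · exact (hFu.mono hsub).intervalIntegrable_of_Icc (hreflect ht).1
  have hreverse : ∫ s in t..T, F s (u (T - s)) = ∫ s in 0..(T - t), F (T - s) (u s) := by
    simpa only [sub_sub_cancel, sub_self] using
      intervalIntegral.integral_comp_sub_left (fun s => F (T - s) (u s)) T (a := t) (b := T)
  rw [hreverse, hFTC, add_sub_cancel]

theorem exists_isBackwardSolution_le_gronwallBound {F : ℝ → ℝ → ℝ} {T h δ k c : ℝ} {L : ℝ≥0}
    (hT : 0 ≤ T) (hδ : 0 ≤ δ) (hk : 0 ≤ k) (hc : 0 ≤ c) (hhδ : h ≤ δ)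
    (hF : ContinuousOn F.uncurry (Icc 0 T ×ˢ Icc h (gronwallBound δ k c T)))
    (hlip : ∀ s ∈ Icc 0 T, LipschitzOnWith L (F s) (Icc h (gronwallBound δ k c T)))
    (hFh : ∀ s ∈ Icc 0 T, 0 ≤ F s h)
    (hF_le : ∀ s ∈ Icc 0 T, ∀ x ∈ Icc δ (gronwallBound δ k c T), F s x ≤ k * x + c) :
    ∃ y : ℝ → ℝ, IsBackwardSolution F h T y ∧
      ∀ t ∈ Icc 0 T, y t ∈ Icc h (gronwallBound δ k c T) := by
  have hβ_mono : Monotone (gronwallBound δ k c) := gronwallBound_mono hδ hc hk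
  have hβ_mem : ∀ t ∈ Icc 0 T, gronwallBound δ k c t ∈ Icc δ (gronwallBound δ k c T) :=
    fun t ht => ⟨(gronwallBound_x0 δ k c).symm.trans_le (hβ_mono ht.1), hβ_mono ht.2⟩
  have hreflect : MapsTo (T - ·) (Icc 0 T) (Icc 0 T) := fun _ =>
    sub_mem_Icc_zero_iff_right.2
  have hIcc : ∀ t ∈ Icc 0 T,
      Icc h (gronwallBound δ k c t) ⊆ Icc h (gronwallBound δ k c T) :=
    fun t ht => Icc_subset_Icc_right (hβ_mono ht.2)
  obtain ⟨u, rfl, hu⟩ := exists_hasDerivWithinAt_mem_Icc_of_barriers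
    (F := fun t => F (T - t)) (α := fun _ => h) (α' := fun _ => 0) (β := gronwallBound δ k c)
    hT
    (hF.comp (f := fun p : ℝ × ℝ => (T - p.1, p.2)) (by fun_prop)
      fun p hp => ⟨hreflect hp.1, hIcc p.1 hp.1 hp.2⟩)
    (fun t ht => (hlip _ (hreflect ht)).mono (hIcc t ht))
    continuousOn_const (fun t _ => hasDerivWithinAt_const t _ h)
    (fun t ht => hFh _ (hreflect (Ico_subset_Icc_self ht)))
    (fun t _ => (hasDerivAt_gronwallBound δ k c t).continuousAt.continuousWithinAt)
    (fun t _ => (hasDerivAt_gronwallBound δ k c t).hasDerivWithinAt)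
    (fun t ht => hF_le _ (hreflect (Ico_subset_Icc_self ht)) _ (hβ_mem t (Ico_subset_Icc_self ht)))
    (fun t ht => hhδ.trans (hβ_mem t ht).1)
    ⟨le_rfl, hhδ.trans_eq (gronwallBound_x0 δ k c).symm⟩
  have hu_mem : ∀ t ∈ Icc 0 T, u t ∈ Icc (u 0) (gronwallBound δ k c T) :=
    fun t ht => hIcc t ht (hu t ht).2
  have hu_cont : ContinuousOn u (Icc 0 T) := fun t ht => (hu t ht).1.continuousWithinAt
  exact ⟨fun t => u (T - t),
    isBackwardSolution_comp_sub_left (fun t ht => (hu t ht).1)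
      (hF.comp ((by fun_prop : ContinuousOn (T - ·) (Icc 0 T)).prodMk hu_cont)
        fun t ht => ⟨hreflect ht, hu_mem t ht⟩),
    fun t ht => hu_mem _ (hreflect ht)⟩

/-- The autonomous cubic generator `F(y) = f₁ + a₁ y + a₂ y² + a₃ y³`. -/
def cubicGenerator (f1 a1 a2 a3 y : ℝ) : ℝ :=
  f1 + a1 * y + a2 * y ^ 2 + a3 * y ^ 3

theorem contDiff_cubicGenerator (f1 a1 a2 a3 : ℝ) :
    ContDiff ℝ 1 (cubicGenerator f1 a1 a2 a3) := by
  unfold cubicGenerator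
  fun_prop

theorem exists_lipschitzOnWith_cubicGenerator (f1 a1 a2 a3 : ℝ) {s : Set ℝ} (hs : IsCompact s) :
    ∃ L, LipschitzOnWith L (cubicGenerator f1 a1 a2 a3) s :=
  (contDiff_cubicGenerator f1 a1 a2 a3).locallyLipschitz.locallyLipschitzOn
    |>.exists_lipschitzOnWith_of_compact hs

theorem cubicGenerator_le_affine {f1 a1 a2 a3 p q ε C x : ℝ} (hf1 : f1 ≤ p) (ha1 : a1 ≤ q)
    (ha2 : a2 ≤ ε) (ha3 : a3 ≤ ε) (hε : 0 ≤ ε) (hx : x ∈ Icc 0 C) :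
    cubicGenerator f1 a1 a2 a3 x ≤ q * x + (p + ε * (C ^ 2 + C ^ 3)) := by
  obtain ⟨hx0, hxC⟩ := hx
  calc cubicGenerator f1 a1 a2 a3 x ≤ p + q * x + ε * x ^ 2 + ε * x ^ 3 := by
        unfold cubicGenerator
        gcongr
    _ ≤ p + q * x + ε * C ^ 2 + ε * C ^ 3 := by gcongr
    _ = q * x + (p + ε * (C ^ 2 + C ^ 3)) := by ring

theorem stmt3_general {T K : ℝ} (hT : 0 ≤ T) (hK : 0 < K) :
    ∃ ε : ℝ, 0 < ε ∧ ∃ C : ℝ, 0 < C ∧ ∀ f1 a1 a2 a3 h : ℝ,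
      f1 ≤ K → a1 ≤ K → h ≤ K → a3 ≤ ε → a2 ≤ ε → 0 ≤ cubicGenerator f1 a1 a2 a3 h →
      ∃ y : ℝ → ℝ, IsBackwardSolution (fun _ => cubicGenerator f1 a1 a2 a3) h T y ∧
        ∀ t ∈ Icc 0 T, y t ∈ Icc h C := by
  set C := gronwallBound K K (2 * K) T
  have hC : 0 < C := hK.trans_le <| (gronwallBound_x0 K K (2 * K)).symm.trans_le <|
    gronwallBound_mono hK.le (by positivity) hK.le hT
  refine ⟨K / (C ^ 2 + C ^ 3), by positivity, C, hC, fun f1 a1 a2 a3 h hf1 ha1 hh ha3 ha2 hF => ?_⟩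
  obtain ⟨L, hL⟩ : ∃ L, LipschitzOnWith L (cubicGenerator f1 a1 a2 a3) (Icc h C) :=
    exists_lipschitzOnWith_cubicGenerator f1 a1 a2 a3 isCompact_Icc
  have h_affine : ∀ x ∈ Icc K C, cubicGenerator f1 a1 a2 a3 x ≤ K * x + 2 * K := fun x hx => by
    have h_le := cubicGenerator_le_affine hf1 ha1 ha2 ha3 (by positivity) ⟨hK.le.trans hx.1, hx.2⟩
    rwa [div_mul_cancel₀ K (by positivity), ← two_mul] at h_le
  exact exists_isBackwardSolution_le_gronwallBound hT hK.le hK.le (by positivity) hh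
    ((contDiff_cubicGenerator f1 a1 a2 a3).continuous.comp continuous_snd).continuousOn
    (fun _ _ => hL) (fun _ _ => hF) (fun _ _ => h_affine)

/-- Bounded solutions on a fixed horizon for cubic generators with small
nonlinear coefficients, case `F(h) > 0` (Theorem 5.4 (ii)). -/
theorem stmt3 :
    ∀ T : ℝ, 0 < T → ∀ K : ℝ, 0 < K →
      ∃ ε : ℝ, 0 < ε ∧ ∃ C : ℝ, 0 < C ∧
        ∀ f1 a1 a2 a3 h : ℝ,
          |f1| ≤ K → |a1| ≤ K → |h| ≤ K → a3 ≤ ε → a2 ≤ ε →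
          0 < f1 + a1 * h + a2 * h ^ 2 + a3 * h ^ 3 →
          ∃ y : ℝ → ℝ, ContinuousOn y (Icc 0 T) ∧
            ∀ t ∈ Icc (0:ℝ) T,
              (y t = h + ∫ s in t..T,
                (f1 + a1 * y s + a2 * (y s) ^ 2 + a3 * (y s) ^ 3)) ∧
              h ≤ y t ∧ y t ≤ C := by
  intro T hT K hK
  obtain ⟨ε, hε, C, hC, hsol⟩ := stmt3_general hT.le hK
  refine ⟨ε, hε, C, hC, fun f1 a1 a2 a3 h hf1 ha1 hh ha3 ha2 hF => ?_⟩
  obtain ⟨y, ⟨hy_cont, hy_eq⟩, hy_mem⟩ := hsol f1 a1 a2 a3 h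
    (le_of_abs_le hf1) (le_of_abs_le ha1) (le_of_abs_le hh) ha3 ha2 hF.le
  exact ⟨y, hy_cont, fun t ht => ⟨hy_eq t ht, hy_mem t ht⟩⟩
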